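/- Let r_e, z_e, α : ℝ → ℝ be differentiable, R(h,t) = r_e(h) − t·sin(α(h)), Z(h,t) = z_e(h) + t·cos(α(h)), and F(h,φ,t) = (R cos φ, R sin φ, Z). Then for every (h, φ, t), the Jacobian determinant of F vanishes, det(J_F)(h,φ,t) = 0, if and only if either R(h,t) = 0 (the sagittal caustic: the ray meets the optical axis) or r_e'(h)·cos(α(h)) + z_e'(h)·sin(α(h)) − t·α'(h) = 0 (the meridional caustic condition). -/

import Mathlib

/-!
In cylindrical coordinates the rotation angle decouples: the Jacobian matrix of `F` is the one of
the cylindrical coordinate change, of determinant `R`, times a matrix that splits into the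
meridional `2 × 2` Jacobian `∂(R, Z)/∂(h, t)` and a `1` for `φ`. For straight rays the identity
`cos² α + sin² α = 1` reduces the meridional determinant to `r_e' cos α + z_e' sin α - t α'`,
so the two caustics are the zero sets of the two factors.
-/

open Matrix Real

/-- Radial coordinate of the exiting ray: `R(h,t) = r_e(h) − t sin α(h)`. -/
noncomputable def rayR (r_e α : ℝ → ℝ) (h t : ℝ) : ℝ := r_e h - t * Real.sin (α h)

/-- Axial coordinate of the exiting ray: `Z(h,t) = z_e(h) + t cos α(h)`. -/
noncomputable def rayZ (z_e α : ℝ → ℝ) (h t : ℝ) : ℝ := z_e h + t * Real.cos (α h)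

/-- The exiting ray family `F(h,φ,t) = (R cos φ, R sin φ, Z)`. -/
noncomputable def rayF (r_e z_e α : ℝ → ℝ) (h φ t : ℝ) : Fin 3 → ℝ :=
  ![rayR r_e α h t * Real.cos φ, rayR r_e α h t * Real.sin φ, rayZ z_e α h t]

/-- Jacobian determinant of `F` with respect to `(h, φ, t)`
(columns `∂F/∂h, ∂F/∂φ, ∂F/∂t`). -/
noncomputable def rayJdet (r_e z_e α : ℝ → ℝ) (h φ t : ℝ) : ℝ :=
  (Matrix.of fun i j : Fin 3 =>
    ![deriv (fun x => rayF r_e z_e α x φ t) h,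
      deriv (fun x => rayF r_e z_e α h x t) φ,
      deriv (fun x => rayF r_e z_e α h φ x) t] j i).det

section Revolution

/-- The Cartesian coordinates of the point with cylindrical coordinates `(r, φ, z)`. No restriction
is put on `r`, since rays may cross the optical axis, where `r` changes sign. -/
noncomputable def cylindrical (r φ z : ℝ) : Fin 3 → ℝ :=
  ![r * cos φ, r * sin φ, z]

/-- The Jacobian matrix of `cylindrical` with respect to `(r, φ, z)`; it does not depend on `z`. -/
noncomputable def cylindricalJacobian (r φ : ℝ) : Matrix (Fin 3) (Fin 3) ℝ :=
  !![cos φ, -(r * sin φ), 0; sin φ, r * cos φ, 0; 0, 0, 1]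

/-- The Jacobian determinant with respect to `(h, φ, t)` of the family `(R h t, φ, Z h t)` of
points in cylindrical coordinates, obtained by rotating the meridional family `(R, Z)` about the
axis; the columns are the partial derivatives, as in `rayJdet`. -/
noncomputable def revolutionJdet (R Z : ℝ → ℝ → ℝ) (h φ t : ℝ) : ℝ :=
  (Matrix.of fun i j : Fin 3 =>
    ![deriv (fun x => cylindrical (R x t) φ (Z x t)) h,
      deriv (fun x => cylindrical (R h t) x (Z h t)) φ,
      deriv (fun x => cylindrical (R h x) φ (Z h x)) t] j i).det

/-- The Jacobian determinant `∂(R, Z)/∂(h, t)` of a two-parameter family of points `(R, Z)` in the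
meridional plane. -/
noncomputable def meridionalJdet (R Z : ℝ → ℝ → ℝ) (h t : ℝ) : ℝ :=
  !![deriv (fun x => R x t) h, deriv (fun x => R h x) t;
     deriv (fun x => Z x t) h, deriv (fun x => Z h x) t].det

theorem det_cylindricalJacobian (r φ : ℝ) : (cylindricalJacobian r φ).det = r := by
  simp only [cylindricalJacobian, det_fin_three, of_apply, cons_val]
  linear_combination r * sin_sq_add_cos_sq φ

theorem cylindricalJacobian_mulVec (r φ a b c : ℝ) :
    cylindricalJacobian r φ *ᵥ ![a, b, c] =
      ![a * cos φ + r * (-sin φ * b), a * sin φ + r * (cos φ * b), c] := by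
  ext i
  fin_cases i <;> simp [cylindricalJacobian] <;> ring

theorem hasDerivAt_cylindrical {ρ θ ζ : ℝ → ℝ} {ρ' θ' ζ' x : ℝ} (hρ : HasDerivAt ρ ρ' x)
    (hθ : HasDerivAt θ θ' x) (hζ : HasDerivAt ζ ζ' x) :
    HasDerivAt (fun y => cylindrical (ρ y) (θ y) (ζ y))
      (cylindricalJacobian (ρ x) (θ x) *ᵥ ![ρ', θ', ζ']) x := by
  rw [cylindricalJacobian_mulVec, hasDerivAt_pi]
  intro i
  fin_cases i
  · exact hρ.mul hθ.cos
  · exact hρ.mul hθ.sin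
  · exact hζ

theorem revolutionJdet_eq_mul_meridionalJdet {R Z : ℝ → ℝ → ℝ} {h t : ℝ}
    (hRh : DifferentiableAt ℝ (fun x => R x t) h) (hRt : DifferentiableAt ℝ (fun x => R h x) t)
    (hZh : DifferentiableAt ℝ (fun x => Z x t) h) (hZt : DifferentiableAt ℝ (fun x => Z h x) t)
    (φ : ℝ) :
    revolutionJdet R Z h φ t = R h t * meridionalJdet R Z h t := by
  set R_h := deriv (fun x => R x t) h
  set R_t := deriv (fun x => R h x) t
  set Z_h := deriv (fun x => Z x t) h
  set Z_t := deriv (fun x => Z h x) t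
  let J := cylindricalJacobian (R h t) φ
  have deriv_h : deriv (fun x => cylindrical (R x t) φ (Z x t)) h = J *ᵥ ![R_h, 0, Z_h] :=
    (hasDerivAt_cylindrical hRh.hasDerivAt (hasDerivAt_const h φ) hZh.hasDerivAt).deriv
  have deriv_φ : deriv (fun x => cylindrical (R h t) x (Z h t)) φ = J *ᵥ ![0, 1, 0] :=
    (hasDerivAt_cylindrical (hasDerivAt_const φ _) (hasDerivAt_id φ) (hasDerivAt_const φ _)).deriv
  have deriv_t : deriv (fun x => cylindrical (R h x) φ (Z h x)) t = J *ᵥ ![R_t, 0, Z_t] :=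
    (hasDerivAt_cylindrical hRt.hasDerivAt (hasDerivAt_const t φ) hZt.hasDerivAt).deriv
  calc
    revolutionJdet R Z h φ t = (J * !![R_h, 0, R_t; 0, 1, 0; Z_h, 0, Z_t]).det := by
      rw [revolutionJdet, deriv_h, deriv_φ, deriv_t]
      congr 1
      ext i j
      fin_cases j <;> simp [mul_apply, mulVec, dotProduct, Fin.sum_univ_three]
    _ = R h t * (R_h * Z_t - R_t * Z_h) := by
      rw [det_mul, det_cylindricalJacobian, det_fin_three]
      simp only [of_apply, cons_val]
      ring
    _ = R h t * meridionalJdet R Z h t := by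
      rw [meridionalJdet, det_fin_two_of]

end Revolution

section Rays

variable {r_e z_e α : ℝ → ℝ} {h : ℝ}

theorem hasDerivAt_rayR_height (hr : DifferentiableAt ℝ r_e h) (hα : DifferentiableAt ℝ α h)
    (t : ℝ) :
    HasDerivAt (fun x => rayR r_e α x t) (deriv r_e h - t * (cos (α h) * deriv α h)) h :=
  hr.hasDerivAt.sub (hα.hasDerivAt.sin.const_mul t)

theorem hasDerivAt_rayZ_height (hz : DifferentiableAt ℝ z_e h) (hα : DifferentiableAt ℝ α h)
    (t : ℝ) :
    HasDerivAt (fun x => rayZ z_e α x t) (deriv z_e h + t * (-sin (α h) * deriv α h)) h :=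
  hz.hasDerivAt.add (hα.hasDerivAt.cos.const_mul t)

theorem hasDerivAt_rayR_length (r_e α : ℝ → ℝ) (h t : ℝ) :
    HasDerivAt (fun x => rayR r_e α h x) (-sin (α h)) t :=
  (hasDerivAt_mul_const (sin (α h))).const_sub (r_e h)

theorem hasDerivAt_rayZ_length (z_e α : ℝ → ℝ) (h t : ℝ) :
    HasDerivAt (fun x => rayZ z_e α h x) (cos (α h)) t :=
  (hasDerivAt_mul_const (cos (α h))).const_add (z_e h)

theorem meridionalJdet_ray (hr : DifferentiableAt ℝ r_e h) (hz : DifferentiableAt ℝ z_e h)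
    (hα : DifferentiableAt ℝ α h) (t : ℝ) :
    meridionalJdet (rayR r_e α) (rayZ z_e α) h t =
      deriv r_e h * cos (α h) + deriv z_e h * sin (α h) - t * deriv α h := by
  rw [meridionalJdet, det_fin_two_of, (hasDerivAt_rayR_height hr hα t).deriv,
    (hasDerivAt_rayR_length r_e α h t).deriv, (hasDerivAt_rayZ_height hz hα t).deriv,
    (hasDerivAt_rayZ_length z_e α h t).deriv]
  linear_combination -(t * deriv α h) * sin_sq_add_cos_sq (α h)

theorem rayJdet_eq_revolutionJdet (r_e z_e α : ℝ → ℝ) (h φ t : ℝ) :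
    rayJdet r_e z_e α h φ t = revolutionJdet (rayR r_e α) (rayZ z_e α) h φ t :=
  rfl

theorem rayJdet_eq_rayR_mul (hr : DifferentiableAt ℝ r_e h) (hz : DifferentiableAt ℝ z_e h)
    (hα : DifferentiableAt ℝ α h) (φ t : ℝ) :
    rayJdet r_e z_e α h φ t = rayR r_e α h t *
      (deriv r_e h * cos (α h) + deriv z_e h * sin (α h) - t * deriv α h) := by
  rw [rayJdet_eq_revolutionJdet, revolutionJdet_eq_mul_meridionalJdet
    (hasDerivAt_rayR_height hr hα t).differentiableAt
    (hasDerivAt_rayR_length r_e α h t).differentiableAt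
    (hasDerivAt_rayZ_height hz hα t).differentiableAt
    (hasDerivAt_rayZ_length z_e α h t).differentiableAt, meridionalJdet_ray hr hz hα]

end Rays

/-- the Jacobian determinant of the exiting ray family vanishes iff
either `R(h,t) = 0` (sagittal caustic) or
`r_e' cos α + z_e' sin α − t α' = 0` (meridional caustic condition). -/
theorem caustic_dichotomy (r_e z_e α : ℝ → ℝ)
    (hr : Differentiable ℝ r_e) (hz : Differentiable ℝ z_e) (hα : Differentiable ℝ α) :
    ∀ h φ t : ℝ,
      rayJdet r_e z_e α h φ t = 0 ↔
        rayR r_e α h t = 0 ∨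
          deriv r_e h * Real.cos (α h) + deriv z_e h * Real.sin (α h) -
            t * deriv α h = 0 := by
  intro h φ t
  rw [rayJdet_eq_rayR_mul (hr h) (hz h) (hα h), mul_eq_zero]
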